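/- Let β(x) = e^{-x} (the SNE case). For every solution Y(t) of the gradient flow of the relative entropy there exists a constant C > For every solution Y(t) of the gradient flow there exists C > 0 (depending on n, s, the initial configuration Y(0) and the probabilities p_{ij}, but not on t) such that diam Y(t) ≤ C for all t ≥ 0. -/

import Mathlib

open Filter Topology

/-- The normalizing constant `Z = Σ_{k ≠ ℓ} β(|y_k - y_ℓ|²)`. -/
noncomputable def pairZ {E : Type*} [NormedAddCommGroup E] (β : ℝ → ℝ) {n : ℕ}
    (Y : Fin n → E) : ℝ :=
  ∑ k : Fin n, ∑ l : Fin n, if k ≠ l then β (‖Y k - Y l‖ ^ 2) else 0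

/-- The low-dimensional similarity `q_{ij}(Y) = β(|y_i - y_j|²) / Z(Y)`. -/
noncomputable def qfun {E : Type*} [NormedAddCommGroup E] (β : ℝ → ℝ) {n : ℕ}
    (Y : Fin n → E) (i j : Fin n) : ℝ :=
  β (‖Y i - Y j‖ ^ 2) / pairZ β Y

/-- The derivative `(log β)'` on `[0, ∞)`. -/
noncomputable def lbd (β : ℝ → ℝ) : ℝ → ℝ :=
  fun x => derivWithin (fun y => Real.log (β y)) (Set.Ici 0) x

/-- `Y : ℝ → Fin n → E` is a solution of the gradient flow of the relative entropy:
`dy_i/dt = 4 Σ_{j ≠ i} (p_{ij} - q_{ij}(Y)) (y_i - y_j) (log β)'(|y_i - y_j|²)` for `t ≥ 0`. -/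
def IsGradFlow {E : Type*} [NormedAddCommGroup E] [NormedSpace ℝ E] (β : ℝ → ℝ) {n : ℕ}
    (p : Fin n → Fin n → ℝ) (Y : ℝ → Fin n → E) : Prop :=
  ∀ i : Fin n, ∀ t ∈ Set.Ici (0 : ℝ),
    HasDerivWithinAt (fun u => Y u i)
      (∑ j ∈ Finset.univ.filter (· ≠ i),
        (4 * (p i j - qfun β (Y t) i j) * lbd β (‖Y t i - Y t j‖ ^ 2)) • (Y t i - Y t j))
      (Set.Ici 0) t

/-- The diameter of the configuration `Y`, i.e. `max_{i,j} |y_i - y_j|`. -/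
noncomputable def diamY {E : Type*} [NormedAddCommGroup E] {n : ℕ} (Y : Fin n → E) : ℝ :=
  Metric.diam (Set.range Y)

/-!
The flow is the gradient flow of the relative entropy, so the function
`F(Y) = log Z(Y) - Σ_{i ≠ j} p_{ij} log β(|y_i - y_j|²)`, which differs from the relative entropy
by a constant, decreases along it. For `β(x) = e^{-x}`, let `m` be the smallest squared distance in
the configuration. Then `log Z ≥ -m`, hence `p_{ij} (|y_i - y_j|² - m) ≤ F(Y)`: along the flow all
squared distances agree up to a bounded error. Affinely dependent points cannot be nearly
equidistant at a large scale, and more than `s + 1` points of `ℝ^s` are affinely dependent.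
-/

open Finset Module Real
open scoped RealInnerProductSpace

lemma exists_ne_forall_ne_le {ι α : Type*} [Finite ι] [Nontrivial ι] [LinearOrder α]
    (f : ι → ι → α) : ∃ k l, k ≠ l ∧ ∀ i j, i ≠ j → f k l ≤ f i j := by
  obtain ⟨i, j, hij⟩ := exists_pair_ne ι
  obtain ⟨x, hx, hmin⟩ := Set.exists_min_image {x : ι × ι | x.1 ≠ x.2} (fun x => f x.1 x.2)
    (Set.toFinite _) ⟨(i, j), hij⟩
  exact ⟨x.1, x.2, hx, fun i j hij => hmin (i, j) hij⟩

section OffDiagonalSums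

variable {ι : Type*} [Fintype ι] [DecidableEq ι]

lemma sum_univ_offDiag {M : Type*} [AddCommMonoid M] (f : ι → ι → M) :
    ∑ x ∈ univ.offDiag, f x.1 x.2 = ∑ i, ∑ j, if i ≠ j then f i j else 0 := by
  rw [← Fintype.sum_prod_type', ← sum_filter]
  congr 1
  ext x
  simp

lemma sum_offDiag_mul_inner_sub_sub {E : Type*} [NormedAddCommGroup E] [InnerProductSpace ℝ E]
    {c : ι → ι → ℝ} (hc : ∀ i j, c i j = c j i) (y v : ι → E) :
    ∑ x ∈ univ.offDiag, c x.1 x.2 * ⟪y x.1 - y x.2, v x.1 - v x.2⟫ =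
      2 * ∑ i, ⟪∑ j with j ≠ i, c i j • (y i - y j), v i⟫ := by
  have hswap : ∑ x ∈ univ.offDiag, c x.1 x.2 * ⟪y x.1 - y x.2, v x.2⟫ =
      -∑ x ∈ univ.offDiag, c x.1 x.2 * ⟪y x.1 - y x.2, v x.1⟫ := by
    rw [← sum_neg_distrib]
    refine sum_equiv (Equiv.prodComm ι ι) (by simp [eq_comm]) fun x _ => ?_
    rw [Equiv.prodComm_apply, Prod.fst_swap, Prod.snd_swap, hc x.2, ← neg_sub (y x.1),
      inner_neg_left, mul_neg, neg_neg]
  have hrow : ∑ x ∈ univ.offDiag, c x.1 x.2 * ⟪y x.1 - y x.2, v x.1⟫ =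
      ∑ i, ⟪∑ j with j ≠ i, c i j • (y i - y j), v i⟫ := by
    rw [sum_univ_offDiag fun i j => c i j * ⟪y i - y j, v i⟫]
    simp only [sum_inner, real_inner_smul_left, ← sum_filter, ne_comm]
  simp only [inner_sub_right, mul_sub, sum_sub_distrib, hswap, hrow]
  ring

end OffDiagonalSums

section AffineDependence

variable {ι V P : Type*} [Fintype ι] [NormedAddCommGroup V] [InnerProductSpace ℝ V]
  [MetricSpace P] [NormedAddTorsor V P]

lemma exists_ne_zero_sum_eq_zero_sum_mul_dist_sq_eq_zero {y : ι → P}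
    (hy : ¬AffineIndependent ℝ y) :
    ∃ w : ι → ℝ, w ≠ 0 ∧ ∑ i, w i = 0 ∧ ∑ i, ∑ j, w i * w j * dist (y i) (y j) ^ 2 = 0 := by
  rw [affineIndependent_iff_of_fintype] at hy
  push Not at hy
  obtain ⟨w, hw, hwy, i, hi⟩ := hy
  refine ⟨w, fun h => hi (congrFun h i), hw, ?_⟩
  have h := EuclideanGeometry.inner_weightedVSub y hw y hw
  rw [hwy, inner_zero_left] at h
  simp only [pow_two]
  linarith

lemma le_card_mul_sub_of_dist_sq_mem_Icc {y : ι → P} (hy : ¬AffineIndependent ℝ y) {a b : ℝ}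
    (hab : Pairwise fun i j => dist (y i) (y j) ^ 2 ∈ Set.Icc a b) :
    b ≤ Fintype.card ι * (b - a) := by
  classical
  have : Nontrivial ι := not_subsingleton_iff_nontrivial.1 fun _ =>
    hy (affineIndependent_of_subsingleton ℝ y)
  obtain ⟨i₀, j₀, hne⟩ := exists_pair_ne ι
  have hba : 0 ≤ b - a := sub_nonneg.2 ((hab hne).1.trans (hab hne).2)
  obtain ⟨w, hw_ne, hw_sum, hw_dist⟩ := exists_ne_zero_sum_eq_zero_sum_mul_dist_sq_eq_zero hy
  -- The weights `w i * w j` annihilate both the constant `b` and the squared distances, so on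
  -- summation only the diagonal and the error term survive.
  have hterm (i j : ι) : (if i = j then b * w i ^ 2 else 0) ≤
      w i * w j * b - w i * w j * dist (y i) (y j) ^ 2 + |w i| * |w j| * (b - a) := by
    rw [← abs_mul]
    split_ifs with hij
    · subst hij
      rw [dist_self]
      nlinarith [mul_nonneg (abs_nonneg (w i * w i)) hba]
    · obtain ⟨ha, hb⟩ := hab hij
      nlinarith [neg_abs_le (w i * w j), abs_nonneg (w i * w j)]
  have hsum : b * ∑ i, w i ^ 2 ≤ (∑ i, |w i|) ^ 2 * (b - a) := by
    have h := sum_le_sum fun i (_ : i ∈ univ) => sum_le_sum fun j (_ : j ∈ univ) => hterm i j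
    simpa only [sum_add_distrib, sum_sub_distrib, hw_dist, sum_ite_eq, mem_univ, if_true,
      ← sum_mul, ← mul_sum, hw_sum, ← sum_mul_sum, ← pow_two, mul_zero, zero_mul, sub_zero,
      sum_const_zero, zero_add] using h
  have hcauchy : (∑ i, |w i|) ^ 2 ≤ Fintype.card ι * ∑ i, w i ^ 2 := by
    simpa only [sq_abs, card_univ] using sq_sum_le_card_mul_sum_sq (s := univ) (f := fun i => |w i|)
  have hpos : 0 < ∑ i, w i ^ 2 := by
    obtain ⟨i, hi⟩ := Function.ne_iff.1 hw_ne
    exact sum_pos' (fun i _ => sq_nonneg _) ⟨i, mem_univ i, sq_pos_of_ne_zero hi⟩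
  refine le_of_mul_le_mul_right ?_ hpos
  calc b * ∑ i, w i ^ 2 ≤ (∑ i, |w i|) ^ 2 * (b - a) := hsum
    _ ≤ Fintype.card ι * (∑ i, w i ^ 2) * (b - a) := mul_le_mul_of_nonneg_right hcauchy hba
    _ = Fintype.card ι * (b - a) * ∑ i, w i ^ 2 := by ring

end AffineDependence

/-- The relative entropy of `p` with respect to `q(Y)`, up to the additive constant
`Σ_{i ≠ j} p_{ij} log p_{ij}` when the off-diagonal sum of `p` is `1`. It is the Lyapunov function
of the flow. -/
noncomputable def reducedEntropy {E : Type*} [NormedAddCommGroup E] (β : ℝ → ℝ) {n : ℕ}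
    (p : Fin n → Fin n → ℝ) (Y : Fin n → E) : ℝ :=
  log (pairZ β Y) - ∑ x ∈ univ.offDiag, p x.1 x.2 * log (β (‖Y x.1 - Y x.2‖ ^ 2))

section Normalization

variable {E : Type*} [NormedAddCommGroup E] {β : ℝ → ℝ} {n : ℕ}

lemma pairZ_eq_sum_offDiag (β : ℝ → ℝ) (Y : Fin n → E) :
    pairZ β Y = ∑ x ∈ univ.offDiag, β (‖Y x.1 - Y x.2‖ ^ 2) :=
  (sum_univ_offDiag fun k l => β (‖Y k - Y l‖ ^ 2)).symm

lemma le_pairZ (hβ : ∀ x, 0 ≤ x → 0 ≤ β x) (Y : Fin n → E) {k l : Fin n} (hkl : k ≠ l) :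
    β (‖Y k - Y l‖ ^ 2) ≤ pairZ β Y := by
  rw [pairZ_eq_sum_offDiag]
  exact single_le_sum (f := fun x : Fin n × Fin n => β (‖Y x.1 - Y x.2‖ ^ 2))
    (fun x _ => hβ _ (sq_nonneg _)) (a := (k, l)) (by simpa using hkl)

lemma pairZ_pos [Nontrivial (Fin n)] (hβ : ∀ x, 0 ≤ x → 0 < β x) (Y : Fin n → E) :
    0 < pairZ β Y :=
  have ⟨_, _, hkl⟩ := exists_pair_ne (Fin n)
  (hβ _ (sq_nonneg _)).trans_le (le_pairZ (fun x hx => (hβ x hx).le) Y hkl)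

lemma qfun_comm (β : ℝ → ℝ) (Y : Fin n → E) (i j : Fin n) : qfun β Y i j = qfun β Y j i := by
  rw [qfun, qfun, norm_sub_rev]

end Normalization

section Dissipation

variable {β : ℝ → ℝ}

lemma hasDerivWithinAt_log_lbd (hβ : ∀ x, 0 ≤ x → 0 < β x)
    (hβd : DifferentiableOn ℝ β (Set.Ici 0)) {x : ℝ} (hx : 0 ≤ x) :
    HasDerivWithinAt (fun y => log (β y)) (lbd β x) (Set.Ici 0) x :=
  ((hβd x hx).log (hβ x hx).ne').hasDerivWithinAt

lemma hasDerivWithinAt_mul_lbd (hβ : ∀ x, 0 ≤ x → 0 < β x)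
    (hβd : DifferentiableOn ℝ β (Set.Ici 0)) {x : ℝ} (hx : 0 ≤ x) :
    HasDerivWithinAt β (β x * lbd β x) (Set.Ici 0) x := by
  refine (hβd x hx).hasDerivWithinAt.congr_deriv ?_
  rw [lbd, derivWithin.log (hβd x hx) (hβ x hx).ne' (uniqueDiffOn_Ici 0 x hx),
    mul_div_cancel₀ _ (hβ x hx).ne']

variable {E : Type*} [NormedAddCommGroup E] [InnerProductSpace ℝ E] {n : ℕ}

lemma hasDerivWithinAt_reducedEntropy [Nontrivial (Fin n)] (hβ : ∀ x, 0 ≤ x → 0 < β x)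
    (hβd : DifferentiableOn ℝ β (Set.Ici 0)) (p : Fin n → Fin n → ℝ) {Y : ℝ → Fin n → E}
    {V : Fin n → E} {S : Set ℝ} {t : ℝ}
    (hY : ∀ i, HasDerivWithinAt (fun u => Y u i) (V i) S t) :
    HasDerivWithinAt (fun u => reducedEntropy β p (Y u))
      (-2 * ∑ x ∈ univ.offDiag, (p x.1 x.2 - qfun β (Y t) x.1 x.2) *
        lbd β (‖Y t x.1 - Y t x.2‖ ^ 2) * ⟪Y t x.1 - Y t x.2, V x.1 - V x.2⟫) S t := by
  have hcomp {g : ℝ → ℝ} {g' : ℝ} (i j : Fin n)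
      (hg : HasDerivWithinAt g g' (Set.Ici 0) (‖Y t i - Y t j‖ ^ 2)) :
      HasDerivWithinAt (fun u => g (‖Y u i - Y u j‖ ^ 2))
        (g' * (2 * ⟪Y t i - Y t j, V i - V j⟫)) S t :=
    hg.comp t ((hY i).sub (hY j)).norm_sq fun _ _ => sq_nonneg _
  have hZ : HasDerivWithinAt (fun u => pairZ β (Y u)) (∑ x ∈ univ.offDiag,
      β (‖Y t x.1 - Y t x.2‖ ^ 2) * lbd β (‖Y t x.1 - Y t x.2‖ ^ 2) *
        (2 * ⟪Y t x.1 - Y t x.2, V x.1 - V x.2⟫)) S t := by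
    simp only [pairZ_eq_sum_offDiag]
    exact HasDerivWithinAt.fun_sum fun x _ =>
      hcomp x.1 x.2 (hasDerivWithinAt_mul_lbd hβ hβd (sq_nonneg _))
  have hlog : HasDerivWithinAt
      (fun u => ∑ x ∈ univ.offDiag, p x.1 x.2 * log (β (‖Y u x.1 - Y u x.2‖ ^ 2)))
      (∑ x ∈ univ.offDiag, p x.1 x.2 * (lbd β (‖Y t x.1 - Y t x.2‖ ^ 2) *
        (2 * ⟪Y t x.1 - Y t x.2, V x.1 - V x.2⟫))) S t :=
    HasDerivWithinAt.fun_sum fun x _ =>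
      (hcomp x.1 x.2 (hasDerivWithinAt_log_lbd hβ hβd (sq_nonneg _))).const_mul _
  refine ((hZ.log (pairZ_pos hβ (Y t)).ne').sub hlog).congr_deriv ?_
  rw [sum_div, ← sum_sub_distrib, mul_sum]
  refine sum_congr rfl fun x _ => ?_
  rw [qfun]
  ring

/-- The velocity field whose integral curves are the solutions of the gradient flow. -/
noncomputable def flowVelocity (β : ℝ → ℝ) (p : Fin n → Fin n → ℝ) (Y : Fin n → E) (i : Fin n) :
    E :=
  ∑ j with j ≠ i, (4 * (p i j - qfun β Y i j) * lbd β (‖Y i - Y j‖ ^ 2)) • (Y i - Y j)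

lemma IsGradFlow.entropy_dissipation [Nontrivial (Fin n)] (hβ : ∀ x, 0 ≤ x → 0 < β x)
    (hβd : DifferentiableOn ℝ β (Set.Ici 0)) {p : Fin n → Fin n → ℝ} (hp : ∀ i j, p i j = p j i)
    {Y : ℝ → Fin n → E} (hY : IsGradFlow β p Y) {t : ℝ} (ht : 0 ≤ t) :
    HasDerivWithinAt (fun u => reducedEntropy β p (Y u))
      (-∑ i, ‖flowVelocity β p (Y t) i‖ ^ 2) (Set.Ici 0) t := by
  set V := flowVelocity β p (Y t)
  have hderiv := hasDerivWithinAt_reducedEntropy hβ hβd p (V := V) fun i => hY i t ht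
  refine hderiv.congr_deriv ?_
  rw [sum_offDiag_mul_inner_sub_sub
    (c := fun i j => (p i j - qfun β (Y t) i j) * lbd β (‖Y t i - Y t j‖ ^ 2))
    fun i j => by rw [hp, qfun_comm, norm_sub_rev]]
  have hforce (i : Fin n) : ‖V i‖ ^ 2 = 4 * ⟪∑ j with j ≠ i,
      ((p i j - qfun β (Y t) i j) * lbd β (‖Y t i - Y t j‖ ^ 2)) • (Y t i - Y t j), V i⟫ := by
    rw [← real_inner_self_eq_norm_sq, ← real_inner_smul_left, smul_sum]
    simp only [smul_smul, ← mul_assoc]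
    rfl
  simp only [hforce, ← mul_sum]
  ring

lemma IsGradFlow.antitoneOn_reducedEntropy [Nontrivial (Fin n)] (hβ : ∀ x, 0 ≤ x → 0 < β x)
    (hβd : DifferentiableOn ℝ β (Set.Ici 0)) {p : Fin n → Fin n → ℝ} (hp : ∀ i j, p i j = p j i)
    {Y : ℝ → Fin n → E} (hY : IsGradFlow β p Y) :
    AntitoneOn (fun t => reducedEntropy β p (Y t)) (Set.Ici 0) := by
  have hderiv (t : ℝ) (ht : t ∈ Set.Ici 0) := hY.entropy_dissipation hβ hβd hp ht
  exact antitoneOn_of_hasDerivWithinAt_nonpos (convex_Ici 0)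
    (fun t ht => (hderiv t ht).continuousWithinAt)
    (fun t ht => (hderiv t (interior_subset ht)).mono interior_subset)
    fun t _ => neg_nonpos.2 (sum_nonneg fun i _ => sq_nonneg _)

end Dissipation

section Coercivity

variable {E : Type*} [NormedAddCommGroup E] {n : ℕ} {p : Fin n → Fin n → ℝ}

lemma mul_norm_sub_sq_sub_le_reducedEntropy (hp : ∀ i j, i ≠ j → 0 ≤ p i j)
    (hsum : 1 ≤ ∑ x ∈ univ.offDiag, p x.1 x.2) (y : Fin n → E) {k l : Fin n} (hkl : k ≠ l)
    (hmin : ∀ i j, i ≠ j → ‖y k - y l‖ ^ 2 ≤ ‖y i - y j‖ ^ 2) {i j : Fin n} (hij : i ≠ j) :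
    p i j * (‖y i - y j‖ ^ 2 - ‖y k - y l‖ ^ 2) ≤ reducedEntropy (fun x => exp (-x)) p y := by
  have hZ : exp (-‖y k - y l‖ ^ 2) ≤ pairZ (fun x => exp (-x)) y :=
    le_pairZ (fun _ _ => (exp_pos _).le) y hkl
  have hlog : -‖y k - y l‖ ^ 2 ≤ log (pairZ (fun x => exp (-x)) y) :=
    (le_log_iff_exp_le ((exp_pos _).trans_le hZ)).2 hZ
  have hterm : p i j * (‖y i - y j‖ ^ 2 - ‖y k - y l‖ ^ 2) ≤
      ∑ x ∈ univ.offDiag, p x.1 x.2 * (‖y x.1 - y x.2‖ ^ 2 - ‖y k - y l‖ ^ 2) := by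
    refine single_le_sum (a := (i, j))
      (f := fun x : Fin n × Fin n => p x.1 x.2 * (‖y x.1 - y x.2‖ ^ 2 - ‖y k - y l‖ ^ 2))
      (fun x hx => ?_) (by simpa using hij)
    have hne : x.1 ≠ x.2 := (mem_offDiag.1 hx).2.2
    exact mul_nonneg (hp _ _ hne) (sub_nonneg.2 (hmin _ _ hne))
  simp only [reducedEntropy, log_exp, mul_neg, sum_neg_distrib, sub_neg_eq_add]
  simp only [mul_sub, sum_sub_distrib, ← sum_mul] at hterm
  have hmass := le_mul_of_one_le_left (sq_nonneg ‖y k - y l‖) hsum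
  linarith

lemma diamY_le_sqrt {y : Fin n → E} {c : ℝ} (h : ∀ i j, i ≠ j → ‖y i - y j‖ ^ 2 ≤ c) :
    diamY y ≤ √c := by
  refine Metric.diam_le_of_forall_dist_le (sqrt_nonneg c) ?_
  rintro _ ⟨i, rfl⟩ _ ⟨j, rfl⟩
  obtain rfl | hij := eq_or_ne i j
  · simp only [dist_self, sqrt_nonneg]
  · rw [dist_eq_norm]
    exact le_sqrt_of_sq_le (h i j hij)

variable [InnerProductSpace ℝ E]

lemma diamY_le_sqrt_of_reducedEntropy_le {m F : ℝ} (hm : 0 < m) (hp : ∀ i j, i ≠ j → m ≤ p i j)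
    (hsum : 1 ≤ ∑ x ∈ univ.offDiag, p x.1 x.2) {y : Fin n → E} (hy : ¬AffineIndependent ℝ y)
    (hF : reducedEntropy (fun x => exp (-x)) p y ≤ F) :
    diamY y ≤ √(n * (F / m)) := by
  have : Nontrivial (Fin n) := not_subsingleton_iff_nontrivial.1 fun _ =>
    hy (affineIndependent_of_subsingleton ℝ y)
  obtain ⟨k, l, hkl, hmin⟩ := exists_ne_forall_ne_le fun i j => ‖y i - y j‖ ^ 2
  have hle (i j : Fin n) (hij : i ≠ j) : ‖y i - y j‖ ^ 2 ≤ ‖y k - y l‖ ^ 2 + F / m := by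
    rw [← sub_le_iff_le_add', le_div_iff₀' hm]
    calc m * (‖y i - y j‖ ^ 2 - ‖y k - y l‖ ^ 2)
        ≤ p i j * (‖y i - y j‖ ^ 2 - ‖y k - y l‖ ^ 2) :=
          mul_le_mul_of_nonneg_right (hp i j hij) (sub_nonneg.2 (hmin i j hij))
      _ ≤ F := (mul_norm_sub_sq_sub_le_reducedEntropy (fun i j hij => hm.le.trans (hp i j hij))
          hsum y hkl hmin hij).trans hF
  have hscale : ‖y k - y l‖ ^ 2 + F / m ≤ n * (F / m) := by
    have hIcc : Pairwise fun i j =>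
        dist (y i) (y j) ^ 2 ∈ Set.Icc (‖y k - y l‖ ^ 2) (‖y k - y l‖ ^ 2 + F / m) := by
      simp only [dist_eq_norm]
      exact fun i j hij => ⟨hmin i j hij, hle i j hij⟩
    simpa only [Fintype.card_fin, add_sub_cancel_left] using
      le_card_mul_sub_of_dist_sq_mem_Icc hy hIcc
  exact diamY_le_sqrt fun i j hij => (hle i j hij).trans hscale

end Coercivity

theorem sne_diameter_upper_bound_general {E : Type*} [NormedAddCommGroup E]
    [InnerProductSpace ℝ E] [FiniteDimensional ℝ E] {n : ℕ} (hn : finrank ℝ E + 1 < n)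
    {p : Fin n → Fin n → ℝ} (hsymm : ∀ i j, p i j = p j i) (hppos : ∀ i j, i ≠ j → 0 < p i j)
    (hpsum : 1 ≤ ∑ x ∈ univ.offDiag, p x.1 x.2) {Y : ℝ → Fin n → E}
    (hflow : IsGradFlow (fun x => exp (-x)) p Y) :
    ∃ C : ℝ, 0 < C ∧ ∀ t : ℝ, 0 ≤ t → diamY (Y t) ≤ C := by
  have : Nontrivial (Fin n) := Fin.nontrivial_iff_two_le.2 (by lia)
  obtain ⟨k, l, hkl, hmin⟩ := exists_ne_forall_ne_le p
  have hanti := hflow.antitoneOn_reducedEntropy (fun _ _ => exp_pos _) (by fun_prop) hsymm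
  have hdep (t : ℝ) : ¬AffineIndependent ℝ (Y t) := fun h => by
    have hcard := h.card_le_finrank_succ
    have hspan := (vectorSpan ℝ (Set.range (Y t))).finrank_le
    rw [Fintype.card_fin] at hcard
    lia
  refine ⟨√(n * (reducedEntropy (fun x => exp (-x)) p (Y 0) / p k l)) + 1, by positivity,
    fun t ht => ?_⟩
  have hF := hanti Set.self_mem_Ici ht ht
  exact (diamY_le_sqrt_of_reducedEntropy_le (hppos k l hkl) hmin hpsum (hdep t) hF).trans
    (le_add_of_nonneg_right zero_le_one)

/-- **Theorem 1.2 (ii).** In the SNE case `β(x) = e^{-x}`, every solution of the gradient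
flow of the relative entropy satisfies `diam Y(t) ≤ C` for all `t ≥ 0`. -/
theorem sne_diameter_upper_bound
    (s n : ℕ) (hs : 1 ≤ s) (hn : s + 1 < n)
    (p : Fin n → Fin n → ℝ)
    (hsymm : ∀ i j, p i j = p j i)
    (hppos : ∀ i j, i ≠ j → 0 < p i j)
    (hpsum : (∑ i, ∑ j, if i ≠ j then p i j else (0 : ℝ)) = 1)
    (β : ℝ → ℝ) (hβ : β = fun x => Real.exp (-x))
    (Y : ℝ → Fin n → EuclideanSpace ℝ (Fin s))
    (hflow : IsGradFlow β p Y) :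
    ∃ C : ℝ, 0 < C ∧ ∀ t : ℝ, 0 ≤ t → diamY (Y t) ≤ C := by
  subst hβ
  exact sne_diameter_upper_bound_general (by rwa [finrank_euclideanSpace_fin]) hsymm hppos
    ((sum_univ_offDiag p).trans hpsum).ge hflow
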